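/- The domino basis S_3 is 4-rigid: for all positive semidefinite a, b ∈ M_3(ℂ) with ⟨ψ_i, (a⊗b) ψ_i⟩ ≠ 0 for each of the nine domino states ψ_i, one has ‖(a⊗b)/tr(a⊗b) − I/9‖_max ≤ 4δ, where δ is the disturbance of a⊗b on the domino states. -/

import Mathlib

open Matrix Kronecker
open scoped ComplexOrder

/-- The disturbance `δ` of the product operator `a ⊗ b` on the family of states `ψ`. -/
noncomputable def disturbance {n dA dB : ℕ} (ψ : Fin n → Fin dA × Fin dB → ℂ)
    (a : Matrix (Fin dA) (Fin dA) ℂ) (b : Matrix (Fin dB) (Fin dB) ℂ) : ℝ :=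
  ⨆ p : {q : Fin n × Fin n // q.1 ≠ q.2},
    ‖star (ψ p.1.1) ⬝ᵥ (a ⊗ₖ b).mulVec (ψ p.1.2)‖ /
      Real.sqrt ((star (ψ p.1.1) ⬝ᵥ (a ⊗ₖ b).mulVec (ψ p.1.1)).re *
        (star (ψ p.1.2) ⬝ᵥ (a ⊗ₖ b).mulVec (ψ p.1.2)).re)

/-- The standard basis vector `|i⟩` of `ℂ³`. -/
noncomputable def e3 (i : Fin 3) : Fin 3 → ℂ := fun k => if k = i then 1 else 0

/-- `|i + j⟩ = (|i⟩ + |j⟩)/√2`. -/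
noncomputable def pl (i j : Fin 3) : Fin 3 → ℂ := fun k => (e3 i k + e3 j k) / (Real.sqrt 2 : ℂ)

/-- `|i − j⟩ = (|i⟩ − |j⟩)/√2`. -/
noncomputable def mi (i j : Fin 3) : Fin 3 → ℂ := fun k => (e3 i k - e3 j k) / (Real.sqrt 2 : ℂ)

/-- The product vector `α ⊗ β` in `ℂ³ ⊗ ℂ³`. -/
noncomputable def kp (α β : Fin 3 → ℂ) : Fin 3 × Fin 3 → ℂ := fun p => α p.1 * β p.2

/-- The nine domino states in `ℂ³ ⊗ ℂ³`. -/
noncomputable def dominoStates : Fin 9 → Fin 3 × Fin 3 → ℂ :=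
  ![kp (e3 1) (e3 1),
    kp (e3 0) (pl 0 1), kp (e3 0) (mi 0 1),
    kp (e3 2) (pl 1 2), kp (e3 2) (mi 1 2),
    kp (pl 1 2) (e3 0), kp (mi 1 2) (e3 0),
    kp (pl 0 1) (e3 2), kp (mi 0 1) (e3 2)]

/-- The largest absolute value of an entry of a matrix. -/
noncomputable def maxEntry {m n : Type*} [Fintype m] [Fintype n] (M : Matrix m n ℂ) : ℝ :=
  ⨆ p : m × n, ‖M p.1 p.2‖

/-!
Two observations about a positive semidefinite `M` on the `3 × 3` grid drive the proof; they need
no product structure. If `ψ₊, ψ₋` are the states of a domino with cells `s, t`, then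
`2 Re ⟨ψ₊, M ψ₋⟩ = M s s - M t t` and `⟨ψ₊, M ψ₊⟩ + ⟨ψ₋, M ψ₋⟩ = M s s + M t t`, so the two diagonal
entries are relatively `δ`-close. If `c, d` lie in different tiles, expanding `|c⟩` and `|d⟩` in the
states of their tiles and applying Cauchy–Schwarz bounds `M c d` by `δ` times the geometric mean of
the traces of `M` over the two tiles, which are in turn controlled by `M c c` and `M d d`.

The three cells of the middle column lie in different tiles, so for `M = a ⊗ b` the second
observation controls the off-diagonal entries of `a`, and the middle row does the same for `b`. The
four dominoes link the consecutive diagonal entries of `a` and of `b`, so both diagonals are nearly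
constant. Tracking the constants gives the bound `δ` in place of `4 δ`.
-/

lemma sqrt_mul_sqrt_le_half_add {x y : ℝ} (hx : 0 ≤ x) (hy : 0 ≤ y) : √x * √y ≤ (x + y) / 2 := by
  linarith [two_mul_le_add_sq √x √y, Real.sq_sqrt hx, Real.sq_sqrt hy]

section PosSemidef

variable {n : Type*} {M : Matrix n n ℂ}

lemma two_mul_norm_apply_le_of_posSemidef (hM : M.PosSemidef) (i j : n) :
    2 * ‖M i j‖ ≤ (M i i).re + (M j j).re := by
  obtain ⟨hi, hi'⟩ := Complex.nonneg_iff.1 (hM.diag_nonneg (i := i))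
  obtain ⟨hj, hj'⟩ := Complex.nonneg_iff.1 (hM.diag_nonneg (i := j))
  have hdet : 0 ≤ M i i * M j j - M i j * star (M i j) := by
    have := (hM.submatrix ![i, j]).det_nonneg
    simpa only [det_fin_two, submatrix_apply, cons_val_zero, cons_val_one, cons_val_fin_one,
      ← hM.1.apply j i] using this
  have hsq : ‖M i j‖ ^ 2 ≤ (M i i).re * (M j j).re := by
    have := (Complex.nonneg_iff.1 hdet).1
    rw [Complex.star_def, Complex.mul_conj, Complex.sub_re, Complex.mul_re, Complex.ofReal_re,
      Complex.normSq_eq_norm_sq, ← hi', ← hj'] at this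
    linarith
  refine le_of_sq_le_sq ?_ (by positivity)
  nlinarith [sq_nonneg ((M i i).re - (M j j).re)]

lemma norm_diag_of_posSemidef (hM : M.PosSemidef) (i : n) : ‖M i i‖ = (M i i).re :=
  (Complex.re_eq_norm.2 hM.diag_nonneg).symm

lemma re_diag_pos_of_posSemidef (hM : M.PosSemidef) {i : n} (hi : M i i ≠ 0) : 0 < (M i i).re :=
  norm_diag_of_posSemidef hM i ▸ norm_pos_iff.2 hi

lemma re_diag_add_re_diag_le_re_trace [Fintype n] (hM : M.PosSemidef) {i j : n} (hij : i ≠ j) :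
    (M i i).re + (M j j).re ≤ M.trace.re := by
  classical
  calc (M i i).re + (M j j).re = ∑ k ∈ {i, j}, (M k k).re :=
        (Finset.sum_pair (f := fun k => (M k k).re) hij).symm
    _ ≤ ∑ k, (M k k).re := Finset.sum_le_sum_of_subset_of_nonneg (Finset.subset_univ _)
        fun k _ _ => (Complex.nonneg_iff.1 hM.diag_nonneg).1
    _ = M.trace.re := (Complex.re_sum _ _).symm

lemma re_diag_mem_stdSimplex [Fintype n] (hM : M.PosSemidef) (htr : M.trace = 1) :
    (fun i => (M i i).re) ∈ stdSimplex ℝ n := by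
  refine ⟨fun i => (Complex.nonneg_iff.1 hM.diag_nonneg).1, ?_⟩
  rw [← Complex.re_sum, ← Complex.one_re, ← htr]
  rfl

lemma re_kronecker_apply_diag {m : Type*} {a : Matrix m m ℂ} (ha : a.IsHermitian)
    (b : Matrix n n ℂ) (i : m) (k : n) :
    ((a ⊗ₖ b) (i, k) (i, k)).re = (a i i).re * (b k k).re := by
  have him : (a i i).im = 0 := Complex.conj_eq_iff_im.1 (ha.apply i i)
  rw [kroneckerMap_apply, Complex.mul_re, him, zero_mul, sub_zero]

end PosSemidef

section ResolvesCell

variable {ι n : Type*} [DecidableEq n]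

/-- The states indexed by `I` resolve the cell `c`: the projection `∑ k ∈ I, |ψ k⟩⟨ψ k|` fixes the
basis vector `|c⟩`. This holds when they form an orthonormal basis of the span of a tile
containing `c`. -/
def ResolvesCell (ψ : ι → n → ℂ) (I : Finset ι) (c : n) : Prop :=
  ∑ k ∈ I, star (ψ k c) • ψ k = Pi.single c 1

variable {ψ : ι → n → ℂ} {I : Finset ι} {c : n}

lemma resolvesCell_singleton {k : ι} (hk : ψ k = Pi.single c 1) : ResolvesCell ψ {k} c := by
  rw [ResolvesCell, Finset.sum_singleton, hk, Pi.single_eq_same, star_one, one_smul]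

lemma ResolvesCell.sum_norm_sq (h : ResolvesCell ψ I c) : ∑ k ∈ I, ‖ψ k c‖ ^ 2 = 1 := by
  have hc : ∑ k ∈ I, star (ψ k c) * ψ k c = 1 := by
    simpa only [Finset.sum_apply, Pi.smul_apply, smul_eq_mul, Pi.single_eq_same] using congrFun h c
  have hterm : ∀ k, star (ψ k c) * ψ k c = (‖ψ k c‖ ^ 2 : ℝ) := fun k => by
    rw [Complex.ofReal_pow]; exact Complex.conj_mul' _
  simp only [hterm] at hc
  exact_mod_cast hc

lemma ResolvesCell.sum_norm_mul_sqrt_le (h : ResolvesCell ψ I c) {f : ι → ℝ} (hf : ∀ k, 0 ≤ f k) :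
    ∑ k ∈ I, ‖ψ k c‖ * √(f k) ≤ √(∑ k ∈ I, f k) := by
  have hcs := Real.sum_mul_le_sqrt_mul_sqrt I (fun k => ‖ψ k c‖) fun k => √(f k)
  simpa only [h.sum_norm_sq, Real.sqrt_one, one_mul, Real.sq_sqrt (hf _)] using hcs

end ResolvesCell

section Disturbance

variable {ι n : Type*} [Fintype n]

/-- The expectation value `⟨v, M v⟩` of a Hermitian matrix `M` in the state `v`, as a real
number. -/
noncomputable def expectation (M : Matrix n n ℂ) (v : n → ℂ) : ℝ :=
  (star v ⬝ᵥ M *ᵥ v).re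

/-- The states `ψ` are disturbed by at most `δ` under `M`. This is the bound `disturbance ≤ δ`
cleared of denominators, for an operator `M` that need not be a product. -/
def IsDisturbedBy (M : Matrix n n ℂ) (ψ : ι → n → ℂ) (δ : ℝ) : Prop :=
  ∀ i j, i ≠ j →
    ‖star (ψ i) ⬝ᵥ M *ᵥ ψ j‖ ≤ δ * (√(expectation M (ψ i)) * √(expectation M (ψ j)))

variable {M : Matrix n n ℂ} {ψ : ι → n → ℂ} {δ : ℝ}

lemma expectation_nonneg (hM : M.PosSemidef) (v : n → ℂ) : 0 ≤ expectation M v :=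
  (Complex.nonneg_iff.1 (hM.dotProduct_mulVec_nonneg v)).1

lemma IsDisturbedBy.smul (h : IsDisturbedBy M ψ δ) {c : ℂ} (hc : 0 ≤ c) :
    IsDisturbedBy (c • M) ψ δ := by
  intro i j hij
  obtain ⟨r, hr, rfl⟩ := RCLike.nonneg_iff_exists_ofReal.1 hc
  have hexp : ∀ v, expectation ((r : ℂ) • M) v = r * expectation M v := fun v => by
    simp only [expectation, smul_mulVec, dotProduct_smul, smul_eq_mul, Complex.re_ofReal_mul]
  change ‖star (ψ i) ⬝ᵥ ((r : ℂ) • M) *ᵥ ψ j‖ ≤ _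
  calc ‖star (ψ i) ⬝ᵥ ((r : ℂ) • M) *ᵥ ψ j‖ = r * ‖star (ψ i) ⬝ᵥ M *ᵥ ψ j‖ := by
        rw [smul_mulVec, dotProduct_smul, smul_eq_mul, norm_mul, Complex.norm_of_nonneg hr]
    _ ≤ r * (δ * (√(expectation M (ψ i)) * √(expectation M (ψ j)))) := by
        gcongr; exact h i j hij
    _ = (√r * √r) * (δ * (√(expectation M (ψ i)) * √(expectation M (ψ j)))) := by
        rw [Real.mul_self_sqrt hr]
    _ = δ * (√(expectation ((r : ℂ) • M) (ψ i)) * √(expectation ((r : ℂ) • M) (ψ j))) := by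
        rw [hexp, hexp, Real.sqrt_mul hr, Real.sqrt_mul hr]; ring

lemma disturbance_nonneg {n dA dB : ℕ} (ψ : Fin n → Fin dA × Fin dB → ℂ)
    (a : Matrix (Fin dA) (Fin dA) ℂ) (b : Matrix (Fin dB) (Fin dB) ℂ) :
    0 ≤ disturbance ψ a b :=
  Real.iSup_nonneg fun _ => by positivity

lemma isDisturbedBy_disturbance {n dA dB : ℕ} {ψ : Fin n → Fin dA × Fin dB → ℂ}
    {a : Matrix (Fin dA) (Fin dA) ℂ} {b : Matrix (Fin dB) (Fin dB) ℂ}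
    (hab : (a ⊗ₖ b).PosSemidef) (hnz : ∀ i, star (ψ i) ⬝ᵥ (a ⊗ₖ b) *ᵥ ψ i ≠ 0) :
    IsDisturbedBy (a ⊗ₖ b) ψ (disturbance ψ a b) := by
  intro i j hij
  have hpos : ∀ k, 0 < expectation (a ⊗ₖ b) (ψ k) := fun k =>
    (Complex.pos_iff.1 ((hab.dotProduct_mulVec_nonneg (ψ k)).lt_of_ne' (hnz k))).1
  rw [← Real.sqrt_mul (hpos i).le, ← div_le_iff₀ (Real.sqrt_pos.2 (mul_pos (hpos i) (hpos j)))]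
  exact le_ciSup (f := fun p : {q : Fin n × Fin n // q.1 ≠ q.2} =>
    ‖star (ψ p.1.1) ⬝ᵥ (a ⊗ₖ b) *ᵥ ψ p.1.2‖ /
      √(expectation (a ⊗ₖ b) (ψ p.1.1) * expectation (a ⊗ₖ b) (ψ p.1.2)))
    (Set.finite_range _).bddAbove ⟨(i, j), hij⟩

variable [DecidableEq n] {I J : Finset ι} {c d : n}

lemma ResolvesCell.apply_eq_sum (hc : ResolvesCell ψ I c) (hd : ResolvesCell ψ J d)
    (M : Matrix n n ℂ) :
    M c d = ∑ k ∈ I, ∑ l ∈ J, ψ k c * star (ψ l d) * (star (ψ k) ⬝ᵥ M *ᵥ ψ l) := by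
  calc M c d = star (Pi.single c (1 : ℂ)) ⬝ᵥ M *ᵥ Pi.single d 1 := by
        rw [Pi.star_single, star_one, mulVec_single_one, single_one_dotProduct, col_apply]
    _ = _ := by
        rw [← hc, ← hd]
        simp only [star_sum, star_smul, star_star, sum_dotProduct, mulVec_sum, dotProduct_sum,
          mulVec_smul, smul_dotProduct, dotProduct_smul, smul_eq_mul, Finset.mul_sum, mul_assoc]
        exact Finset.sum_comm.trans
          (Finset.sum_congr rfl fun k _ => Finset.sum_congr rfl fun l _ => mul_left_comm _ _ _)

lemma IsDisturbedBy.norm_apply_le (h : IsDisturbedBy M ψ δ) (hM : M.PosSemidef) (hδ : 0 ≤ δ)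
    (hIJ : Disjoint I J) (hc : ResolvesCell ψ I c) (hd : ResolvesCell ψ J d) :
    ‖M c d‖ ≤ δ * (√(∑ k ∈ I, expectation M (ψ k)) * √(∑ l ∈ J, expectation M (ψ l))) := by
  calc ‖M c d‖ ≤ ∑ k ∈ I, ∑ l ∈ J, ‖ψ k c * star (ψ l d) * (star (ψ k) ⬝ᵥ M *ᵥ ψ l)‖ := by
        rw [hc.apply_eq_sum hd M]
        exact (norm_sum_le _ _).trans (Finset.sum_le_sum fun _ _ => norm_sum_le _ _)
    _ ≤ ∑ k ∈ I, ∑ l ∈ J, ‖ψ k c‖ * ‖ψ l d‖ *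
          (δ * (√(expectation M (ψ k)) * √(expectation M (ψ l)))) := by
        gcongr with k hk l hl
        rw [norm_mul, norm_mul, norm_star]
        gcongr
        exact h k l fun hkl => Finset.disjoint_left.1 hIJ hk (hkl ▸ hl)
    _ = δ * ((∑ k ∈ I, ‖ψ k c‖ * √(expectation M (ψ k))) *
          ∑ l ∈ J, ‖ψ l d‖ * √(expectation M (ψ l))) := by
        rw [Finset.sum_mul_sum, Finset.mul_sum]
        refine Finset.sum_congr rfl fun k _ => ?_
        rw [Finset.mul_sum]
        exact Finset.sum_congr rfl fun l _ => by ring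
    _ ≤ _ := by
        gcongr
        · exact hc.sum_norm_mul_sqrt_le fun _ => expectation_nonneg hM _
        · exact hd.sum_norm_mul_sqrt_le fun _ => expectation_nonneg hM _

lemma IsDisturbedBy.one_sub_mul_norm_apply_le (h : IsDisturbedBy M ψ δ) (hM : M.PosSemidef)
    (hδ : 0 ≤ δ) (hIJ : Disjoint I J) (hc : ResolvesCell ψ I c) (hd : ResolvesCell ψ J d)
    (hIc : (1 - δ) * ∑ k ∈ I, expectation M (ψ k) ≤ 2 * (M c c).re)
    (hJd : (1 - δ) * ∑ l ∈ J, expectation M (ψ l) ≤ 2 * (M d d).re) :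
    (1 - δ) * ‖M c d‖ ≤ δ * ((M c c).re + (M d d).re) := by
  have hMc : 0 ≤ (M c c).re := (Complex.nonneg_iff.1 hM.diag_nonneg).1
  have hMd : 0 ≤ (M d d).re := (Complex.nonneg_iff.1 hM.diag_nonneg).1
  rcases le_total 1 δ with hδ1 | hδ1
  · calc (1 - δ) * ‖M c d‖ ≤ 0 :=
          mul_nonpos_of_nonpos_of_nonneg (sub_nonpos.2 hδ1) (norm_nonneg _)
      _ ≤ δ * ((M c c).re + (M d d).re) := by positivity
  have : 0 ≤ 1 - δ := sub_nonneg.2 hδ1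
  set E := ∑ k ∈ I, expectation M (ψ k)
  set F := ∑ l ∈ J, expectation M (ψ l)
  have hE : 0 ≤ E := Finset.sum_nonneg fun _ _ => expectation_nonneg hM _
  have hF : 0 ≤ F := Finset.sum_nonneg fun _ _ => expectation_nonneg hM _
  have hEF : √E * √F ≤ (E + F) / 2 := sqrt_mul_sqrt_le_half_add hE hF
  calc (1 - δ) * ‖M c d‖ ≤ (1 - δ) * (δ * ((E + F) / 2)) := by
        gcongr
        exact (h.norm_apply_le hM hδ hIJ hc hd).trans (by gcongr)
    _ = δ * (((1 - δ) * E + (1 - δ) * F) / 2) := by ring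
    _ ≤ δ * ((M c c).re + (M d d).re) := by
        gcongr
        linarith

end Disturbance

section Dominoes

variable {ι n : Type*} [DecidableEq n]

/-- The state `(|s⟩ + |t⟩)/√2` on the domino with cells `s` and `t`. -/
noncomputable def plusState (s t : n) : n → ℂ := (√2 : ℂ)⁻¹ • (Pi.single s 1 + Pi.single t 1)

/-- The state `(|s⟩ - |t⟩)/√2` on the domino with cells `s` and `t`. -/
noncomputable def minusState (s t : n) : n → ℂ := (√2 : ℂ)⁻¹ • (Pi.single s 1 - Pi.single t 1)

/-- The states `ψ k` and `ψ l` are the plus and minus states of a domino with cells `s` and `t`. -/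
structure IsDomino (ψ : ι → n → ℂ) (k l : ι) (s t : n) : Prop where
  index_ne : k ≠ l
  cell_ne : s ≠ t
  plus : ψ k = plusState s t
  minus : ψ l = minusState s t

lemma star_inv_sqrt_two : star ((√2 : ℂ)⁻¹) = (√2 : ℂ)⁻¹ := by
  rw [star_inv₀, Complex.star_def, Complex.conj_ofReal]

lemma inv_sqrt_two_mul_self : (√2 : ℂ)⁻¹ * (√2 : ℂ)⁻¹ = 1 / 2 := by
  rw [← mul_inv, ← Complex.ofReal_mul, Real.mul_self_sqrt zero_le_two, Complex.ofReal_ofNat,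
    one_div]

section Form

variable [Fintype n] (M : Matrix n n ℂ) (s t : n)

lemma star_plusState_dotProduct_mulVec_plusState :
    star (plusState s t) ⬝ᵥ M *ᵥ plusState s t = (M s s + M t s + (M s t + M t t)) / 2 := by
  simp only [plusState, star_smul, star_inv_sqrt_two, star_add, Pi.star_single, star_one,
    mulVec_smul, mulVec_add, mulVec_single_one, smul_dotProduct, dotProduct_smul, add_dotProduct,
    dotProduct_add, single_one_dotProduct, col_apply, smul_eq_mul]
  linear_combination (M s s + M s t + M t s + M t t) * inv_sqrt_two_mul_self

lemma star_minusState_dotProduct_mulVec_minusState :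
    star (minusState s t) ⬝ᵥ M *ᵥ minusState s t = (M s s - M t s - (M s t - M t t)) / 2 := by
  simp only [minusState, star_smul, star_inv_sqrt_two, star_sub, Pi.star_single, star_one,
    mulVec_smul, mulVec_sub, mulVec_single_one, smul_dotProduct, dotProduct_smul, sub_dotProduct,
    dotProduct_sub, single_one_dotProduct, col_apply, smul_eq_mul]
  linear_combination (M s s - M s t - M t s + M t t) * inv_sqrt_two_mul_self

lemma star_plusState_dotProduct_mulVec_minusState :
    star (plusState s t) ⬝ᵥ M *ᵥ minusState s t = (M s s + M t s - (M s t + M t t)) / 2 := by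
  simp only [plusState, minusState, star_smul, star_inv_sqrt_two, star_add, Pi.star_single,
    star_one, mulVec_smul, mulVec_sub, mulVec_single_one, smul_dotProduct, dotProduct_smul,
    add_dotProduct, dotProduct_sub, single_one_dotProduct, col_apply, smul_eq_mul]
  linear_combination (M s s - M s t + M t s - M t t) * inv_sqrt_two_mul_self

lemma expectation_plusState_add_minusState :
    expectation M (plusState s t) + expectation M (minusState s t) = (M s s).re + (M t t).re := by
  rw [expectation, expectation, ← Complex.add_re, ← Complex.add_re,
    star_plusState_dotProduct_mulVec_plusState, star_minusState_dotProduct_mulVec_minusState]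
  congr 1
  ring

lemma re_star_plusState_dotProduct_mulVec_minusState {M : Matrix n n ℂ} (hM : M.IsHermitian) :
    (star (plusState s t) ⬝ᵥ M *ᵥ minusState s t).re = ((M s s).re - (M t t).re) / 2 := by
  have hts : (M t s).re = (M s t).re := by rw [← hM.apply t s, Complex.star_def, Complex.conj_re]
  rw [star_plusState_dotProduct_mulVec_minusState, Complex.div_ofNat_re, Complex.sub_re,
    Complex.add_re, Complex.add_re, hts]
  ring

end Form

namespace IsDomino

variable {ψ : ι → n → ℂ} {k l : ι} {s t : n}

lemma resolvesCell_left [DecidableEq ι] (hd : IsDomino ψ k l s t) : ResolvesCell ψ {k, l} s := by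
  rw [ResolvesCell, Finset.sum_pair hd.index_ne, hd.plus, hd.minus]
  simp only [plusState, minusState, Pi.smul_apply, Pi.add_apply, Pi.sub_apply, Pi.single_eq_same,
    Pi.single_eq_of_ne hd.cell_ne, add_zero, sub_zero, smul_eq_mul, mul_one, star_inv_sqrt_two,
    smul_smul, inv_sqrt_two_mul_self]
  module

lemma resolvesCell_right [DecidableEq ι] (hd : IsDomino ψ k l s t) : ResolvesCell ψ {k, l} t := by
  rw [ResolvesCell, Finset.sum_pair hd.index_ne, hd.plus, hd.minus]
  simp only [plusState, minusState, Pi.smul_apply, Pi.add_apply, Pi.sub_apply, Pi.single_eq_same,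
    Pi.single_eq_of_ne' hd.cell_ne, zero_add, zero_sub, smul_eq_mul, mul_one, mul_neg, star_neg,
    star_inv_sqrt_two, neg_smul, neg_mul, smul_smul, inv_sqrt_two_mul_self]
  module

variable [Fintype n] {M : Matrix n n ℂ} {δ : ℝ}

lemma sum_expectation [DecidableEq ι] (hd : IsDomino ψ k l s t) (M : Matrix n n ℂ) :
    ∑ i ∈ {k, l}, expectation M (ψ i) = (M s s).re + (M t t).re := by
  rw [Finset.sum_pair hd.index_ne, hd.plus, hd.minus, expectation_plusState_add_minusState]

lemma abs_diag_sub_le (hd : IsDomino ψ k l s t) (h : IsDisturbedBy M ψ δ) (hM : M.PosSemidef)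
    (hδ : 0 ≤ δ) : |(M s s).re - (M t t).re| ≤ δ * ((M s s).re + (M t t).re) := by
  have hoff := h k l hd.index_ne
  rw [hd.plus, hd.minus] at hoff
  set E := expectation M (plusState s t)
  set F := expectation M (minusState s t)
  have hEF : √E * √F ≤ (E + F) / 2 :=
    sqrt_mul_sqrt_le_half_add (expectation_nonneg hM _) (expectation_nonneg hM _)
  calc |(M s s).re - (M t t).re|
      = 2 * |(star (plusState s t) ⬝ᵥ M *ᵥ minusState s t).re| := by
        rw [re_star_plusState_dotProduct_mulVec_minusState s t hM.1, abs_div, abs_two]; ring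
    _ ≤ 2 * (δ * ((E + F) / 2)) := by
        gcongr
        exact (Complex.abs_re_le_norm _).trans (hoff.trans (by gcongr))
    _ = δ * ((M s s).re + (M t t).re) := by
        rw [← expectation_plusState_add_minusState M s t]; ring

lemma one_sub_mul_sum_expectation_le_left [DecidableEq ι] (hd : IsDomino ψ k l s t)
    (h : IsDisturbedBy M ψ δ) (hM : M.PosSemidef) (hδ : 0 ≤ δ) :
    (1 - δ) * ∑ i ∈ {k, l}, expectation M (ψ i) ≤ 2 * (M s s).re := by
  rw [hd.sum_expectation]
  linarith [(abs_le.1 (hd.abs_diag_sub_le h hM hδ)).1]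

lemma one_sub_mul_sum_expectation_le_right [DecidableEq ι] (hd : IsDomino ψ k l s t)
    (h : IsDisturbedBy M ψ δ) (hM : M.PosSemidef) (hδ : 0 ≤ δ) :
    (1 - δ) * ∑ i ∈ {k, l}, expectation M (ψ i) ≤ 2 * (M t t).re := by
  rw [hd.sum_expectation]
  linarith [(abs_le.1 (hd.abs_diag_sub_le h hM hδ)).2]

end IsDomino

end Dominoes

section KroneckerDomino

variable {ι m n : Type*} [Fintype m] [Fintype n] [DecidableEq m] [DecidableEq n]
  {a : Matrix m m ℂ} {b : Matrix n n ℂ} {ψ : ι → m × n → ℂ} {k l : ι} {δ : ℝ}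

lemma IsDomino.abs_diag_right_sub_le {p : m} {i j : n} (hd : IsDomino ψ k l (p, i) (p, j))
    (ha : a.PosSemidef) (hb : b.PosSemidef) (h : IsDisturbedBy (a ⊗ₖ b) ψ δ)
    (hδ : 0 ≤ δ) (hp : a p p ≠ 0) :
    |(b i i).re - (b j j).re| ≤ δ * ((b i i).re + (b j j).re) := by
  have hpos := re_diag_pos_of_posSemidef ha hp
  have hdiag := hd.abs_diag_sub_le h (ha.kronecker hb) hδ
  simp only [re_kronecker_apply_diag ha.1, ← mul_sub, ← mul_add, abs_mul, abs_of_pos hpos] at hdiag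
  exact le_of_mul_le_mul_left (hdiag.trans_eq (mul_left_comm _ _ _)) hpos

lemma IsDomino.abs_diag_left_sub_le {i j : m} {q : n} (hd : IsDomino ψ k l (i, q) (j, q))
    (ha : a.PosSemidef) (hb : b.PosSemidef) (h : IsDisturbedBy (a ⊗ₖ b) ψ δ)
    (hδ : 0 ≤ δ) (hq : b q q ≠ 0) :
    |(a i i).re - (a j j).re| ≤ δ * ((a i i).re + (a j j).re) := by
  have hpos := re_diag_pos_of_posSemidef hb hq
  have hdiag := hd.abs_diag_sub_le h (ha.kronecker hb) hδ
  simp only [re_kronecker_apply_diag ha.1, ← sub_mul, ← add_mul, abs_mul, abs_of_pos hpos] at hdiag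
  exact le_of_mul_le_mul_right (hdiag.trans_eq (mul_assoc _ _ _).symm) hpos

end KroneckerDomino

section DominoStates

lemma e3_eq_single (i : Fin 3) : e3 i = Pi.single i 1 := by
  ext k; rw [e3, Pi.single_apply]

lemma kp_single_single (p q : Fin 3) :
    kp (Pi.single p 1) (Pi.single q 1) = Pi.single (p, q) 1 := by
  ext ⟨k, l⟩
  simp only [kp, Pi.single_apply, Prod.mk.injEq, ite_zero_mul_ite_zero, mul_one]

lemma kp_e3_pl (p i j : Fin 3) : kp (e3 p) (pl i j) = plusState (p, i) (p, j) := by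
  simp only [plusState, ← kp_single_single, ← e3_eq_single]
  ext x
  simp only [kp, pl, Pi.smul_apply, Pi.add_apply, smul_eq_mul]
  ring

lemma kp_e3_mi (p i j : Fin 3) : kp (e3 p) (mi i j) = minusState (p, i) (p, j) := by
  simp only [minusState, ← kp_single_single, ← e3_eq_single]
  ext x
  simp only [kp, mi, Pi.smul_apply, Pi.sub_apply, smul_eq_mul]
  ring

lemma kp_pl_e3 (i j q : Fin 3) : kp (pl i j) (e3 q) = plusState (i, q) (j, q) := by
  simp only [plusState, ← kp_single_single, ← e3_eq_single]
  ext x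
  simp only [kp, pl, Pi.smul_apply, Pi.add_apply, smul_eq_mul]
  ring

lemma kp_mi_e3 (i j q : Fin 3) : kp (mi i j) (e3 q) = minusState (i, q) (j, q) := by
  simp only [minusState, ← kp_single_single, ← e3_eq_single]
  ext x
  simp only [kp, mi, Pi.smul_apply, Pi.sub_apply, smul_eq_mul]
  ring

lemma dominoStates_zero : dominoStates 0 = Pi.single (1, 1) 1 := by
  rw [← kp_single_single, ← e3_eq_single]; rfl

lemma isDomino_dominoStates_top : IsDomino dominoStates 1 2 (0, 0) (0, 1) :=
  ⟨by decide, by decide, kp_e3_pl 0 0 1, kp_e3_mi 0 0 1⟩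

lemma isDomino_dominoStates_bottom : IsDomino dominoStates 3 4 (2, 1) (2, 2) :=
  ⟨by decide, by decide, kp_e3_pl 2 1 2, kp_e3_mi 2 1 2⟩

lemma isDomino_dominoStates_left : IsDomino dominoStates 5 6 (1, 0) (2, 0) :=
  ⟨by decide, by decide, kp_pl_e3 1 2 0, kp_mi_e3 1 2 0⟩

lemma isDomino_dominoStates_right : IsDomino dominoStates 7 8 (0, 2) (1, 2) :=
  ⟨by decide, by decide, kp_pl_e3 0 1 2, kp_mi_e3 0 1 2⟩

/-- Indices of the domino states on the tile through the cell `(p, 1)` of the middle column. -/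
def columnTile : Fin 3 → Finset (Fin 9) := ![{1, 2}, {0}, {3, 4}]

/-- Indices of the domino states on the tile through the cell `(1, q)` of the middle row. -/
def rowTile : Fin 3 → Finset (Fin 9) := ![{5, 6}, {0}, {7, 8}]

lemma resolvesCell_columnTile : ∀ p, ResolvesCell dominoStates (columnTile p) (p, 1)
  | 0 => isDomino_dominoStates_top.resolvesCell_right
  | 1 => resolvesCell_singleton dominoStates_zero
  | 2 => isDomino_dominoStates_bottom.resolvesCell_left

lemma resolvesCell_rowTile : ∀ q, ResolvesCell dominoStates (rowTile q) (1, q)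
  | 0 => isDomino_dominoStates_left.resolvesCell_left
  | 1 => resolvesCell_singleton dominoStates_zero
  | 2 => isDomino_dominoStates_right.resolvesCell_right

variable {M : Matrix (Fin 3 × Fin 3) (Fin 3 × Fin 3) ℂ} {δ : ℝ}

lemma one_sub_mul_expectation_center_le (hM : M.PosSemidef) (hδ : 0 ≤ δ) :
    (1 - δ) * ∑ k ∈ {0}, expectation M (dominoStates k) ≤ 2 * (M (1, 1) (1, 1)).re := by
  have hcenter : expectation M (dominoStates 0) = (M (1, 1) (1, 1)).re := by
    rw [expectation, dominoStates_zero, Pi.star_single, star_one, mulVec_single_one,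
      single_one_dotProduct, col_apply]
  rw [Finset.sum_singleton, hcenter]
  nlinarith [(Complex.nonneg_iff.1 (hM.diag_nonneg (i := (1, 1)))).1]

lemma one_sub_mul_sum_expectation_columnTile_le (h : IsDisturbedBy M dominoStates δ)
    (hM : M.PosSemidef) (hδ : 0 ≤ δ) : ∀ p,
    (1 - δ) * ∑ k ∈ columnTile p, expectation M (dominoStates k) ≤ 2 * (M (p, 1) (p, 1)).re
  | 0 => isDomino_dominoStates_top.one_sub_mul_sum_expectation_le_right h hM hδ
  | 1 => one_sub_mul_expectation_center_le hM hδ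
  | 2 => isDomino_dominoStates_bottom.one_sub_mul_sum_expectation_le_left h hM hδ

lemma one_sub_mul_sum_expectation_rowTile_le (h : IsDisturbedBy M dominoStates δ)
    (hM : M.PosSemidef) (hδ : 0 ≤ δ) : ∀ q,
    (1 - δ) * ∑ k ∈ rowTile q, expectation M (dominoStates k) ≤ 2 * (M (1, q) (1, q)).re
  | 0 => isDomino_dominoStates_left.one_sub_mul_sum_expectation_le_left h hM hδ
  | 1 => one_sub_mul_expectation_center_le hM hδ
  | 2 => isDomino_dominoStates_right.one_sub_mul_sum_expectation_le_right h hM hδ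

end DominoStates

section Balanced

/-- Consecutive entries of `x` differ by at most `δ` times their sum. -/
def IsBalanced (x : Fin 3 → ℝ) (δ : ℝ) : Prop :=
  |x 0 - x 1| ≤ δ * (x 0 + x 1) ∧ |x 1 - x 2| ≤ δ * (x 1 + x 2)

lemma IsBalanced.abs_three_mul_sub_one_le {x : Fin 3 → ℝ} {δ : ℝ} (h : IsBalanced x δ)
    (hx : x ∈ stdSimplex ℝ (Fin 3)) (hδ : 0 ≤ δ) (i : Fin 3) :
    |3 * x i - 1| ≤ δ * (3 - x i) := by
  obtain ⟨hnonneg, hsum⟩ := hx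
  rw [Fin.sum_univ_three] at hsum
  obtain ⟨h01, h12⟩ := h
  rw [abs_le] at h01 h12
  have hδ0 := mul_nonneg hδ (hnonneg 0)
  have hδ2 := mul_nonneg hδ (hnonneg 2)
  have hδsum : δ * x 0 + δ * x 1 + δ * x 2 = δ := by rw [← mul_add, ← mul_add, hsum, mul_one]
  rw [abs_le]
  fin_cases i <;> simp only [Fin.zero_eta, Fin.mk_one, Fin.reduceFinMk] <;> constructor <;>
    linarith

variable {u v δ : ℝ}

lemma abs_sub_one_third_le (hu : 0 ≤ u) (hδ : 0 ≤ δ) (h : |3 * u - 1| ≤ δ * (3 - u)) :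
    |u - 1 / 3| ≤ δ := by
  have hδu := mul_nonneg hδ hu
  rw [abs_le] at h ⊢
  constructor <;> linarith

lemma abs_mul_sub_one_ninth_le (hu : 0 ≤ u) (hv : 0 ≤ v) (hδ : 0 ≤ δ)
    (hu' : |3 * u - 1| ≤ δ * (3 - u)) (hv' : |3 * v - 1| ≤ δ * (3 - v)) :
    |u * v - 1 / 9| ≤ δ := by
  have hlower : 1 / 9 - δ ≤ u * v := by
    rcases le_total δ (1 / 3) with hδ' | hδ'
    · have hu_ge := (abs_le.1 (abs_sub_one_third_le hu hδ hu')).1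
      have hv_ge := (abs_le.1 (abs_sub_one_third_le hv hδ hv')).1
      calc 1 / 9 - δ ≤ (1 / 3 - δ) * (1 / 3 - δ) := by nlinarith
        _ ≤ u * v := mul_le_mul (by linarith) (by linarith) (sub_nonneg.2 hδ') hu
    · linarith [mul_nonneg hu hv]
  have hupper : (3 + δ) ^ 2 * (u * v) ≤ (3 + δ) ^ 2 * (1 / 9 + δ) := by
    calc (3 + δ) ^ 2 * (u * v) = ((3 + δ) * u) * ((3 + δ) * v) := by ring
      _ ≤ (1 + 3 * δ) * (1 + 3 * δ) := by
          gcongr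
          · linarith [(abs_le.1 hu').2]
          · linarith [(abs_le.1 hv').2]
      _ ≤ (3 + δ) ^ 2 * (1 / 9 + δ) := by
          nlinarith [mul_nonneg hδ (sq_nonneg (δ - 13 / 9))]
  rw [abs_le]
  constructor <;> linarith [le_of_mul_le_mul_left hupper (by positivity)]

end Balanced

section Kronecker

variable {a b : Matrix (Fin 3) (Fin 3) ℂ} {δ : ℝ}

lemma diag_left_ne_zero
    (hnz : ∀ i, star (dominoStates i) ⬝ᵥ (a ⊗ₖ b) *ᵥ dominoStates i ≠ 0) : ∀ i, a i i ≠ 0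
  | 0, ha => hnz 1 <| by
    simp [isDomino_dominoStates_top.plus, star_plusState_dotProduct_mulVec_plusState, ha]
  | 1, ha => hnz 0 <| by simp [dominoStates_zero, Pi.star_single, ha]
  | 2, ha => hnz 3 <| by
    simp [isDomino_dominoStates_bottom.plus, star_plusState_dotProduct_mulVec_plusState, ha]

lemma diag_right_ne_zero
    (hnz : ∀ i, star (dominoStates i) ⬝ᵥ (a ⊗ₖ b) *ᵥ dominoStates i ≠ 0) : ∀ i, b i i ≠ 0
  | 0, hb => hnz 5 <| by
    simp [isDomino_dominoStates_left.plus, star_plusState_dotProduct_mulVec_plusState, hb]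
  | 1, hb => hnz 0 <| by simp [dominoStates_zero, Pi.star_single, hb]
  | 2, hb => hnz 7 <| by
    simp [isDomino_dominoStates_right.plus, star_plusState_dotProduct_mulVec_plusState, hb]

lemma one_sub_mul_norm_apply_left_le (ha : a.PosSemidef) (hb : b.PosSemidef)
    (h : IsDisturbedBy (a ⊗ₖ b) dominoStates δ) (hδ : 0 ≤ δ) (hb1 : b 1 1 ≠ 0) {i j : Fin 3}
    (hij : i ≠ j) : (1 - δ) * ‖a i j‖ ≤ δ * ((a i i).re + (a j j).re) := by
  have hab := ha.kronecker hb
  have hdisj : Disjoint (columnTile i) (columnTile j) := by revert i j; decide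
  have hcell := h.one_sub_mul_norm_apply_le hab hδ hdisj (resolvesCell_columnTile i)
    (resolvesCell_columnTile j) (one_sub_mul_sum_expectation_columnTile_le h hab hδ i)
    (one_sub_mul_sum_expectation_columnTile_le h hab hδ j)
  rw [re_kronecker_apply_diag ha.1, re_kronecker_apply_diag ha.1, kroneckerMap_apply, norm_mul,
    norm_diag_of_posSemidef hb] at hcell
  refine le_of_mul_le_mul_right ?_ (re_diag_pos_of_posSemidef hb hb1)
  linarith

lemma one_sub_mul_norm_apply_right_le (ha : a.PosSemidef) (hb : b.PosSemidef)
    (h : IsDisturbedBy (a ⊗ₖ b) dominoStates δ) (hδ : 0 ≤ δ) (ha1 : a 1 1 ≠ 0) {i j : Fin 3}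
    (hij : i ≠ j) : (1 - δ) * ‖b i j‖ ≤ δ * ((b i i).re + (b j j).re) := by
  have hab := ha.kronecker hb
  have hdisj : Disjoint (rowTile i) (rowTile j) := by revert i j; decide
  have hcell := h.one_sub_mul_norm_apply_le hab hδ hdisj (resolvesCell_rowTile i)
    (resolvesCell_rowTile j) (one_sub_mul_sum_expectation_rowTile_le h hab hδ i)
    (one_sub_mul_sum_expectation_rowTile_le h hab hδ j)
  rw [re_kronecker_apply_diag ha.1, re_kronecker_apply_diag ha.1, kroneckerMap_apply, norm_mul,
    norm_diag_of_posSemidef ha] at hcell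
  refine le_of_mul_le_mul_left ?_ (re_diag_pos_of_posSemidef ha ha1)
  linarith

lemma isBalanced_diag_right (ha : a.PosSemidef) (hb : b.PosSemidef)
    (h : IsDisturbedBy (a ⊗ₖ b) dominoStates δ) (hδ : 0 ≤ δ) (ha0 : a 0 0 ≠ 0) (ha2 : a 2 2 ≠ 0) :
    IsBalanced (fun i => (b i i).re) δ :=
  ⟨isDomino_dominoStates_top.abs_diag_right_sub_le ha hb h hδ ha0,
    isDomino_dominoStates_bottom.abs_diag_right_sub_le ha hb h hδ ha2⟩

lemma isBalanced_diag_left (ha : a.PosSemidef) (hb : b.PosSemidef)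
    (h : IsDisturbedBy (a ⊗ₖ b) dominoStates δ) (hδ : 0 ≤ δ) (hb0 : b 0 0 ≠ 0) (hb2 : b 2 2 ≠ 0) :
    IsBalanced (fun i => (a i i).re) δ :=
  ⟨isDomino_dominoStates_right.abs_diag_left_sub_le ha hb h hδ hb2,
    isDomino_dominoStates_left.abs_diag_left_sub_le ha hb h hδ hb0⟩

lemma norm_apply_mul_norm_apply_le (ha : a.PosSemidef) (hb : b.PosSemidef) (hta : a.trace = 1)
    (htb : b.trace = 1) (hδ : 0 ≤ δ) (hbal : IsBalanced (fun i => (b i i).re) δ) {i j : Fin 3}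
    (hij : i ≠ j) (hoff : (1 - δ) * ‖a i j‖ ≤ δ * ((a i i).re + (a j j).re)) (k l : Fin 3) :
    ‖a i j‖ * ‖b k l‖ ≤ δ := by
  have hdiag : (a i i).re + (a j j).re ≤ 1 := by
    simpa only [hta, Complex.one_re] using re_diag_add_re_diag_le_re_trace ha hij
  have hhalf : 2 * ‖a i j‖ ≤ 1 := (two_mul_norm_apply_le_of_posSemidef ha i j).trans hdiag
  have hdiag_b : ∀ m, (b m m).re ≤ 1 / 3 + δ := fun m => by
    linarith [(abs_le.1 (abs_sub_one_third_le (Complex.nonneg_iff.1 hb.diag_nonneg).1 hδ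
      (hbal.abs_three_mul_sub_one_le (re_diag_mem_stdSimplex hb htb) hδ m))).2]
  have hbkl : ‖b k l‖ ≤ 1 / 3 + δ := by
    linarith [two_mul_norm_apply_le_of_posSemidef hb k l, hdiag_b k, hdiag_b l]
  rcases le_total δ (1 / 3) with hδ' | hδ'
  · calc ‖a i j‖ * ‖b k l‖ ≤ ‖a i j‖ * (1 - δ) := by gcongr; linarith
      _ ≤ δ * ((a i i).re + (a j j).re) := (mul_comm _ _).trans_le hoff
      _ ≤ δ := mul_le_of_le_one_right hδ hdiag
  · calc ‖a i j‖ * ‖b k l‖ ≤ 1 / 2 * (1 / 3 + δ) := by gcongr; linarith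
      _ ≤ δ := by linarith

lemma maxEntry_kronecker_sub_le (ha : a.PosSemidef) (hb : b.PosSemidef) (hta : a.trace = 1)
    (htb : b.trace = 1) (ha0 : ∀ i, a i i ≠ 0) (hb0 : ∀ i, b i i ≠ 0)
    (h : IsDisturbedBy (a ⊗ₖ b) dominoStates δ) (hδ : 0 ≤ δ) :
    maxEntry (a ⊗ₖ b - (9 : ℂ)⁻¹ • (1 : Matrix (Fin 3 × Fin 3) (Fin 3 × Fin 3) ℂ)) ≤ δ := by
  have hbal_a := isBalanced_diag_left ha hb h hδ (hb0 0) (hb0 2)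
  have hbal_b := isBalanced_diag_right ha hb h hδ (ha0 0) (ha0 2)
  refine ciSup_le fun ⟨⟨i, k⟩, ⟨j, l⟩⟩ => ?_
  rw [Matrix.sub_apply, Matrix.smul_apply, kroneckerMap_apply]
  by_cases hij : i = j
  · by_cases hkl : k = l
    · subst hij hkl
      have hentry : a i i * b k k - (9 : ℂ)⁻¹ • 1 = ((a i i).re * (b k k).re - 1 / 9 : ℝ) := by
        have hai : ((a i i).re : ℂ) = a i i := ha.1.coe_re_apply_self i
        have hbk : ((b k k).re : ℂ) = b k k := hb.1.coe_re_apply_self k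
        push_cast
        rw [hai, hbk, smul_eq_mul, mul_one, one_div]
      rw [one_apply_eq, hentry, Complex.norm_real, Real.norm_eq_abs]
      exact abs_mul_sub_one_ninth_le (Complex.nonneg_iff.1 ha.diag_nonneg).1
        (Complex.nonneg_iff.1 hb.diag_nonneg).1 hδ
        (hbal_a.abs_three_mul_sub_one_le (re_diag_mem_stdSimplex ha hta) hδ i)
        (hbal_b.abs_three_mul_sub_one_le (re_diag_mem_stdSimplex hb htb) hδ k)
    · rw [one_apply_ne fun hst => hkl (Prod.ext_iff.1 hst).2, smul_zero, sub_zero, norm_mul,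
        mul_comm]
      exact norm_apply_mul_norm_apply_le hb ha htb hta hδ hbal_a hkl
        (one_sub_mul_norm_apply_right_le ha hb h hδ (ha0 1) hkl) i j
  · rw [one_apply_ne fun hst => hij (Prod.ext_iff.1 hst).1, smul_zero, sub_zero, norm_mul]
    exact norm_apply_mul_norm_apply_le ha hb hta htb hδ hbal_b hij
      (one_sub_mul_norm_apply_left_le ha hb h hδ (hb0 1) hij) k l

end Kronecker

theorem stmt8_general
    (a b : Matrix (Fin 3) (Fin 3) ℂ) (ha : a.PosSemidef) (hb : b.PosSemidef)
    (hnz : ∀ i, star (dominoStates i) ⬝ᵥ (a ⊗ₖ b).mulVec (dominoStates i) ≠ 0) :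
    maxEntry (((a ⊗ₖ b).trace)⁻¹ • (a ⊗ₖ b) -
        ((9 : ℂ))⁻¹ • (1 : Matrix (Fin 3 × Fin 3) (Fin 3 × Fin 3) ℂ)) ≤
      disturbance dominoStates a b := by
  have hab := ha.kronecker hb
  have ha0 := diag_left_ne_zero hnz
  have hb0 := diag_right_ne_zero hnz
  have hta : a.trace ≠ 0 := fun h => ha0 0 (by rw [ha.trace_eq_zero_iff.1 h, Matrix.zero_apply])
  have htb : b.trace ≠ 0 := fun h => hb0 0 (by rw [hb.trace_eq_zero_iff.1 h, Matrix.zero_apply])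
  have hnormalize :
      ((a ⊗ₖ b).trace)⁻¹ • (a ⊗ₖ b) = (a.trace⁻¹ • a) ⊗ₖ (b.trace⁻¹ • b) := by
    rw [trace_kronecker, mul_inv, smul_kronecker, kronecker_smul, smul_smul]
  have hdist := (isDisturbedBy_disturbance hab hnz).smul (inv_nonneg.2 hab.trace_nonneg)
  rw [hnormalize] at hdist ⊢
  exact maxEntry_kronecker_sub_le (ha.smul (inv_nonneg.2 ha.trace_nonneg))
    (hb.smul (inv_nonneg.2 hb.trace_nonneg))
    (by rw [trace_smul, smul_eq_mul, inv_mul_cancel₀ hta])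
    (by rw [trace_smul, smul_eq_mul, inv_mul_cancel₀ htb])
    (fun i => mul_ne_zero (inv_ne_zero hta) (ha0 i))
    (fun i => mul_ne_zero (inv_ne_zero htb) (hb0 i)) hdist (disturbance_nonneg _ _ _)

/-- The domino basis is `4`-rigid:
`‖(a⊗b)/tr(a⊗b) − I/9‖_max ≤ 4δ`. -/
theorem stmt8
    (a b : Matrix (Fin 3) (Fin 3) ℂ) (ha : a.PosSemidef) (hb : b.PosSemidef)
    (hnz : ∀ i, star (dominoStates i) ⬝ᵥ (a ⊗ₖ b).mulVec (dominoStates i) ≠ 0) :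
    maxEntry (((a ⊗ₖ b).trace)⁻¹ • (a ⊗ₖ b) -
        ((9 : ℂ))⁻¹ • (1 : Matrix (Fin 3 × Fin 3) (Fin 3 × Fin 3) ℂ)) ≤
      4 * disturbance dominoStates a b := by
  exact (stmt8_general a b ha hb hnz).trans
    (le_mul_of_one_le_left (disturbance_nonneg _ _ _) (by norm_num))
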